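/- arXiv:1503.03822 — 2 statements merged into one kernel-verified Lean document; each statement's English description precedes it below -/
import Mathlib

section
/- The function associated with noncommutative Minkowski space is a scalar two-particle S-matrix: let κ > 0 and m > 0 and define S(ζ) = exp(i·κ·m²·sinh ζ). Then S is entire; |S(ζ)| ≤ 1 for every ζ with 0 ≤ Im ζ ≤ π; for every real θ one has conj(S(θ)) = S(θ)⁻¹ = S(−θ) (in particular |S(θ)| = 1); and S(iπ − ζ) = S(ζ) for every ζ ∈ ℂ (crossing symmetry). -/
open Complex

/-- The S-matrix of noncommutative Minkowski space, `S(ζ) = exp(i κ m² sinh ζ)`. -/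
noncomputable def ncS (κ m : ℝ) (ζ : ℂ) : ℂ :=
  Complex.exp (Complex.I * (κ : ℂ) * (m : ℂ) ^ 2 * Complex.sinh ζ)

/-!
The exponent `i κ m² sinh ζ` has real part `-κ m² cosh (Re ζ) sin (Im ζ)`, which is nonpositive on
the strip `0 ≤ Im ζ ≤ π` and vanishes on the real axis. The symmetries of `S` are those of `sinh`:
it is odd, commutes with complex conjugation, and is invariant under `ζ ↦ iπ - ζ`.
-/

theorem sinh_im (ζ : ℂ) : (sinh ζ).im = Real.cosh ζ.re * Real.sin ζ.im := by
  calc (sinh ζ).im = (sinh (ζ.re + ζ.im * I)).im := by rw [re_add_im]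
    _ = (Real.sinh ζ.re * Real.cos ζ.im + Real.cosh ζ.re * Real.sin ζ.im * I : ℂ).im := by
      rw [sinh_add, sinh_mul_I, cosh_mul_I]
      push_cast
      rw [mul_assoc]
    _ = Real.cosh ζ.re * Real.sin ζ.im := by
      norm_cast
      simp only [add_im, ofReal_im, zero_add, im_ofReal_mul, I_im, mul_one]

theorem sinh_pi_mul_I_sub (ζ : ℂ) : sinh (Real.pi * I - ζ) = sinh ζ := by
  simp [sinh_sub, sinh_mul_I, cosh_mul_I]

theorem differentiable_ncS (κ m : ℝ) : Differentiable ℂ (ncS κ m) := by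
  unfold ncS
  fun_prop

theorem norm_ncS (κ m : ℝ) (ζ : ℂ) :
    ‖ncS κ m ζ‖ = Real.exp (-(κ * m ^ 2 * (Real.cosh ζ.re * Real.sin ζ.im))) := by
  have exponent_eq : I * κ * m ^ 2 * sinh ζ = (κ * m ^ 2 : ℝ) * (I * sinh ζ) := by
    push_cast
    ring
  rw [ncS, exponent_eq, norm_exp, re_ofReal_mul, I_mul_re, sinh_im, mul_neg]

theorem norm_ncS_le_one {κ : ℝ} (hκ : 0 ≤ κ) (m : ℝ) {ζ : ℂ} (hζ₀ : 0 ≤ ζ.im)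
    (hζπ : ζ.im ≤ Real.pi) : ‖ncS κ m ζ‖ ≤ 1 := by
  rw [norm_ncS, Real.exp_le_one_iff, neg_nonpos]
  have sin_nonneg : 0 ≤ Real.sin ζ.im := Real.sin_nonneg_of_nonneg_of_le_pi hζ₀ hζπ
  positivity

theorem norm_ncS_ofReal (κ m θ : ℝ) : ‖ncS κ m θ‖ = 1 := by
  simp [norm_ncS]

theorem ncS_neg (κ m : ℝ) (ζ : ℂ) : ncS κ m (-ζ) = (ncS κ m ζ)⁻¹ := by
  rw [ncS, ncS, sinh_neg, mul_neg, exp_neg]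

theorem conj_ncS (κ m : ℝ) (ζ : ℂ) :
    starRingEnd ℂ (ncS κ m ζ) = ncS κ m (-starRingEnd ℂ ζ) := by
  simp [ncS, ← exp_conj, sinh_neg, sinh_conj]

theorem conj_ncS_ofReal (κ m θ : ℝ) : starRingEnd ℂ (ncS κ m θ) = ncS κ m (-θ) := by
  rw [conj_ncS, conj_ofReal]

theorem ncS_pi_mul_I_sub (κ m : ℝ) (ζ : ℂ) : ncS κ m (Real.pi * I - ζ) = ncS κ m ζ := by
  rw [ncS, ncS, sinh_pi_mul_I_sub]

/-- for `κ > 0`, `m > 0`, the function `S(ζ) = exp(i κ m² sinh ζ)` is a scalar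
two-particle S-matrix: it is entire, satisfies `|S(ζ)| ≤ 1` on the closed strip
`0 ≤ Im ζ ≤ π`, satisfies `conj(S(θ)) = S(θ)⁻¹ = S(-θ)` (so `|S(θ)| = 1`) for real `θ`, and
crossing symmetry `S(iπ - ζ) = S(ζ)` for all `ζ ∈ ℂ`. -/
theorem ncS_is_S_matrix (κ m : ℝ) (hκ : 0 < κ) (hm : 0 < m) :
    Differentiable ℂ (ncS κ m) ∧
    (∀ ζ : ℂ, 0 ≤ ζ.im → ζ.im ≤ Real.pi → ‖ncS κ m ζ‖ ≤ 1) ∧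
    (∀ θ : ℝ,
        starRingEnd ℂ (ncS κ m θ) = (ncS κ m θ)⁻¹ ∧
        starRingEnd ℂ (ncS κ m θ) = ncS κ m (-θ) ∧
        ‖ncS κ m θ‖ = 1) ∧
    (∀ ζ : ℂ, ncS κ m ((Real.pi : ℂ) * Complex.I - ζ) = ncS κ m ζ) := by
  refine ⟨differentiable_ncS κ m, fun ζ ↦ norm_ncS_le_one hκ.le m, fun θ ↦ ⟨?_, ?_, ?_⟩,
    ncS_pi_mul_I_sub κ m⟩
  · rw [conj_ncS_ofReal, ncS_neg]
  · exact conj_ncS_ofReal κ m θ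
  · exact norm_ncS_ofReal κ m θ
end

section
/- Classification of admissible deformation matrices in dimension d ≠ 4: let d ≥ 2 with d ≠ 4, and let Q be a linear map of ℝ^d that is skew-symmetric with respect to the Minkowski inner product, i.e. ⟨Qx, y⟩ = −⟨x, Qy⟩ for all x, y. Then Q satisfies the three admissibility conditions (i) ΛQΛ⁻¹ = Q for every proper orthochronous Lorentz transformation Λ with Λ(W_R) = W_R, (ii) ΛQΛ⁻¹ = −Q for every proper orthochronous Lorentz transformation Λ with Λ(W_R) = −W_R, and jQj = Q for the reflection j(x) = (−x₀, −x₁, x₂, ..., x_{d−1}), and (iii) Q maps the closed forward light cone {x : x₀ ≥ 0 and ⟨x, x⟩ ≥ 0} into the closed right wedge {x : x₁ ≥ |x₀|} — if and only if there exists κ ≥ 0 such that (Qx)₀ = κ·x₁, (Qx)₁ = κ·x₀, and (Qx)ᵢ = 0 for 2 ≤ i ≤ d − 1, for all x ∈ ℝ^d. -/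
/-- The Minkowski inner product on `ℝ^(d+2)`:
`⟨x,y⟩ = x₀y₀ - x₁y₁ - ⋯ = 2 x₀ y₀ - ∑ᵢ xᵢ yᵢ`. -/
noncomputable def mink {d : ℕ} (x y : Fin (d + 2) → ℝ) : ℝ :=
  2 * x 0 * y 0 - ∑ i, x i * y i

/-- The right wedge `W_R = {x : x₁ > |x₀|}`. -/
def WR {d : ℕ} : Set (Fin (d + 2) → ℝ) := {x | |x 0| < x 1}

/-- The reflection `j(x) = (-x₀, -x₁, x₂, ..., x_{d-1})` about the edge of the right wedge. -/
def jrefl {d : ℕ} (x : Fin (d + 2) → ℝ) : Fin (d + 2) → ℝ :=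
  fun i => if i = 0 then -x 0 else if i = 1 then -x 1 else x i

/-!
Skewness is inherited by `Λ⁻¹ Q Λ` for Lorentz `Λ`, and the skew maps annihilating the edge
`{x₀ = x₁ = 0}` of the wedge form a line, spanned by the generator `B` of the boosts in the
`x₀x₁`-plane.

If `Q` is admissible, then commutation with the reflection `j` and with the half turns in the
`xᵢxₗ`-planes parallel to the edge kills every entry of `Q` outside the wedge plane: an entry
joining two distinct edge directions `i`, `k` needs a third one `l`, which is missing exactly when
the edge is a plane, i.e. in dimension four. So `Q = κ B`, and the cone condition at the time axis
gives `κ ≥ 0`.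

Conversely a Lorentz transformation `Λ` with `Λ(W_R) = ± W_R` preserves the edge, because the edge
consists of the directions of the lines contained in `W_R`. Hence `Λ⁻¹ B Λ` is skew and kills the
edge, so it equals `c B`. As `B² = 1` on the wedge plane, `c = ± 1`, and the sign is read off
from the images of `e₀` (orthochronous) and `e₁` (wedge).
-/

section SignFlip

variable {ι : Type*} [Fintype ι] [DecidableEq ι]

/-- The diagonal map negating the coordinates in `s`. It encodes both the reflection `j`
(`s = {0, 1}`) and the half turn in the `xᵢxₗ`-plane (`s = {i, l}`). -/
noncomputable def signFlip (s : Finset ι) : (ι → ℝ) →ₗ[ℝ] (ι → ℝ) :=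
  Matrix.toLin' (Matrix.diagonal fun i => if i ∈ s then -1 else 1)

theorem signFlip_apply (s : Finset ι) (x : ι → ℝ) (i : ι) :
    signFlip s x i = if i ∈ s then -x i else x i := by
  simp [signFlip, Matrix.mulVec_diagonal]

theorem signFlip_involutive (s : Finset ι) : Function.Involutive (signFlip s) := by
  intro x
  ext i
  by_cases hi : i ∈ s <;> simp [signFlip_apply, hi]

theorem det_signFlip (s : Finset ι) : LinearMap.det (signFlip s) = (-1) ^ s.card := by
  simp [signFlip, LinearMap.det_toLin']

theorem signFlip_single (s : Finset ι) (i : ι) (a : ℝ) :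
    signFlip s (Pi.single i a) = Pi.single i (if i ∈ s then -a else a) := by
  ext k
  obtain rfl | hk := eq_or_ne k i <;> simp [signFlip_apply, *]

theorem map_single_apply_eq_zero_of_commute_signFlip {Q : (ι → ℝ) →ₗ[ℝ] (ι → ℝ)} {s : Finset ι}
    (hQ : ∀ x, signFlip s (Q x) = Q (signFlip s x)) {i k : ι} (hik : ¬(i ∈ s ↔ k ∈ s)) (a : ℝ) :
    Q (Pi.single i a) k = 0 := by
  have h := congrFun (hQ (Pi.single i a)) k
  rw [signFlip_apply, signFlip_single] at h
  by_cases hi : i ∈ s <;> by_cases hk : k ∈ s <;>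
    simp only [hi, hk, if_true, if_false, not_true, Pi.single_neg, map_neg, Pi.neg_apply]
      at h hik <;>
    linarith

end SignFlip

variable {d : ℕ}

theorem mink_eq (x y : Fin (d + 2) → ℝ) :
    mink x y = x 0 * y 0 - x 1 * y 1 - ∑ i : Fin d, x i.succ.succ * y i.succ.succ := by
  rw [mink, Fin.sum_univ_succ, Fin.sum_univ_succ, Fin.succ_zero_eq_one]
  ring

theorem mink_comm (x y : Fin (d + 2) → ℝ) : mink x y = mink y x := by
  simp only [mink_eq, mul_comm]

theorem mink_single_right (x : Fin (d + 2) → ℝ) (i : Fin (d + 2)) (a : ℝ) :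
    mink x (Pi.single i a) = if i = 0 then x 0 * a else -(x i * a) := by
  obtain rfl | hi := eq_or_ne i 0
  · have hsum : ∑ j, x j * (Pi.single 0 a : Fin (d + 2) → ℝ) j = x 0 * a := by
      simp [Pi.single_apply]
    rw [mink, hsum, Pi.single_eq_same, if_pos rfl]
    ring
  · simp [mink, Pi.single_apply, hi, hi.symm]

theorem abs_apply_one_le_of_mink_self_nonneg {x : Fin (d + 2) → ℝ} (hx₀ : 0 ≤ x 0)
    (hx : 0 ≤ mink x x) : |x 1| ≤ x 0 := by
  have hsum : 0 ≤ ∑ i : Fin d, x i.succ.succ * x i.succ.succ :=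
    Finset.sum_nonneg fun i _ => mul_self_nonneg _
  rw [mink_eq] at hx
  exact abs_le_of_sq_le_sq (by linarith) hx₀

theorem mink_signFlip (s : Finset (Fin (d + 2))) (x y : Fin (d + 2) → ℝ) :
    mink (signFlip s x) (signFlip s y) = mink x y := by
  have h (i : Fin (d + 2)) : signFlip s x i * signFlip s y i = x i * y i := by
    by_cases hi : i ∈ s <;> simp [signFlip_apply, hi]
  simp only [mink_eq, h]

theorem image_signFlip_WR {s : Finset (Fin (d + 2))} (h₀ : 0 ∉ s) (h₁ : 1 ∉ s) :
    signFlip s '' WR = WR := by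
  rw [(signFlip_involutive s).image_eq_preimage_symm]
  ext x
  simp [WR, signFlip_apply, h₀, h₁]

theorem jrefl_eq_signFlip (x : Fin (d + 2) → ℝ) : jrefl x = signFlip {0, 1} x := by
  ext i
  simp only [jrefl, signFlip_apply, Finset.mem_insert, Finset.mem_singleton]
  obtain rfl | h₀ := eq_or_ne i 0
  · simp
  obtain rfl | h₁ := eq_or_ne i 1 <;> simp [*]

theorem signFlip_commute_of_jrefl {Q : (Fin (d + 2) → ℝ) →ₗ[ℝ] (Fin (d + 2) → ℝ)}
    (hQ : ∀ x, jrefl (Q (jrefl x)) = Q x) (x : Fin (d + 2) → ℝ) :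
    signFlip {0, 1} (Q x) = Q (signFlip {0, 1} x) := by
  rw [← hQ x, jrefl_eq_signFlip, jrefl_eq_signFlip, signFlip_involutive]

/-- The generator `x ↦ (x₁, x₀, 0, …, 0)` of the boosts in the `x₀x₁`-plane, the standard form that
admissible deformation matrices are compared with. -/
def boostGenerator (d : ℕ) : (Fin (d + 2) → ℝ) →ₗ[ℝ] (Fin (d + 2) → ℝ) :=
  LinearMap.single ℝ _ 0 ∘ₗ LinearMap.proj 1 + LinearMap.single ℝ _ 1 ∘ₗ LinearMap.proj 0

theorem boostGenerator_apply (x : Fin (d + 2) → ℝ) :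
    boostGenerator d x = Pi.single 0 (x 1) + Pi.single 1 (x 0) := rfl

@[simp]
theorem boostGenerator_apply_zero (x : Fin (d + 2) → ℝ) : boostGenerator d x 0 = x 1 := by
  simp [boostGenerator_apply]

@[simp]
theorem boostGenerator_apply_one (x : Fin (d + 2) → ℝ) : boostGenerator d x 1 = x 0 := by
  simp [boostGenerator_apply]

theorem boostGenerator_apply_of_ne (x : Fin (d + 2) → ℝ) {i : Fin (d + 2)} (h₀ : i ≠ 0)
    (h₁ : i ≠ 1) : boostGenerator d x i = 0 := by
  simp [boostGenerator_apply, h₀, h₁]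

@[simp]
theorem boostGenerator_single_zero (a : ℝ) :
    boostGenerator d (Pi.single 0 a) = Pi.single 1 a := by
  simp [boostGenerator_apply]

@[simp]
theorem boostGenerator_single_one (a : ℝ) :
    boostGenerator d (Pi.single 1 a) = Pi.single 0 a := by
  simp [boostGenerator_apply]

theorem eq_smul_boostGenerator_iff {Q : (Fin (d + 2) → ℝ) →ₗ[ℝ] (Fin (d + 2) → ℝ)} {κ : ℝ} :
    Q = κ • boostGenerator d ↔ ∀ x : Fin (d + 2) → ℝ,
      Q x 0 = κ * x 1 ∧ Q x 1 = κ * x 0 ∧ ∀ i : Fin (d + 2), i ≠ 0 → i ≠ 1 → Q x i = 0 := by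
  constructor
  · rintro rfl x
    simp +contextual [boostGenerator_apply_of_ne]
  · intro h
    refine LinearMap.ext fun x => funext fun i => ?_
    obtain ⟨hx₀, hx₁, hx⟩ := h x
    obtain rfl | h₀ := eq_or_ne i 0
    · simp [hx₀]
    obtain rfl | h₁ := eq_or_ne i 1
    · simp [hx₁]
    · simp [hx i h₀ h₁, boostGenerator_apply_of_ne x h₀ h₁]

theorem mink_boostGenerator_left (x y : Fin (d + 2) → ℝ) :
    mink (boostGenerator d x) y = -mink x (boostGenerator d y) := by
  have h (z : Fin (d + 2) → ℝ) (i : Fin d) : boostGenerator d z i.succ.succ = 0 :=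
    boostGenerator_apply_of_ne z (Fin.succ_ne_zero _) (Fin.succ_succ_ne_one _)
  simp only [mink_eq, boostGenerator_apply_zero, boostGenerator_apply_one, h]
  simp only [zero_mul, mul_zero, Finset.sum_const_zero]
  ring

theorem jrefl_smul_boostGenerator_jrefl (κ : ℝ) (x : Fin (d + 2) → ℝ) :
    jrefl ((κ • boostGenerator d) (jrefl x)) = (κ • boostGenerator d) x := by
  have hB : boostGenerator d (signFlip {0, 1} x) = -boostGenerator d x := by
    simp [boostGenerator_apply, signFlip_apply, Pi.single_neg, add_comm]
  have hj : signFlip {0, 1} (boostGenerator d x) = -boostGenerator d x := by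
    simp [boostGenerator_apply, signFlip_single, Pi.single_neg, add_comm]
  simp [jrefl_eq_signFlip, hB, hj]

section Skew

variable {Q : (Fin (d + 2) → ℝ) →ₗ[ℝ] (Fin (d + 2) → ℝ)}

theorem map_single_apply_self_eq_zero (hskew : ∀ x y, mink (Q x) y = -mink x (Q y))
    (i : Fin (d + 2)) : Q (Pi.single i 1) i = 0 := by
  have h : mink (Q (Pi.single i 1)) (Pi.single i 1) = 0 := by
    linarith [hskew (Pi.single i 1) (Pi.single i 1), mink_comm (Q (Pi.single i 1)) (Pi.single i 1)]
  obtain rfl | hi := eq_or_ne i 0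
  · simpa [mink_single_right] using h
  · simpa [mink_single_right, hi] using h

theorem eq_smul_boostGenerator (hskew : ∀ x y, mink (Q x) y = -mink x (Q y))
    (hedge : ∀ i, i ≠ 0 → i ≠ 1 → Q (Pi.single i 1) = 0) :
    Q = Q (Pi.single 0 1) 1 • boostGenerator d := by
  have hrange (x : Fin (d + 2) → ℝ) (i : Fin (d + 2)) (h₀ : i ≠ 0) (h₁ : i ≠ 1) : Q x i = 0 := by
    have hzero : mink x 0 = 0 := by simp [mink]
    simpa [mink_single_right, h₀, hedge i h₀ h₁, hzero] using hskew x (Pi.single i 1)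
  have hQ₀ : Q (Pi.single 0 1) = Pi.single 1 (Q (Pi.single 0 1) 1) := by
    ext k
    obtain rfl | h₀ := eq_or_ne k 0
    · simp [map_single_apply_self_eq_zero hskew]
    obtain rfl | h₁ := eq_or_ne k 1
    · simp
    · simp [hrange _ k h₀ h₁, h₁]
  have hx₀ (x : Fin (d + 2) → ℝ) : Q x 0 = Q (Pi.single 0 1) 1 * x 1 := by
    have h := hskew x (Pi.single 0 1)
    rw [hQ₀] at h
    simpa [mink_single_right, mul_comm] using h
  have hQ₁ : Q (Pi.single 1 1) = Pi.single 0 (Q (Pi.single 0 1) 1) := by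
    ext k
    obtain rfl | h₀ := eq_or_ne k 0
    · simp [hx₀ (Pi.single 1 1)]
    obtain rfl | h₁ := eq_or_ne k 1
    · simp [map_single_apply_self_eq_zero hskew]
    · simp [hrange _ k h₀ h₁, h₀]
  refine eq_smul_boostGenerator_iff.2 fun x => ⟨hx₀ x, ?_, hrange x⟩
  have h := hskew x (Pi.single 1 1)
  rw [hQ₁] at h
  simpa [mink_single_right, mul_comm] using h

theorem exists_notMem_of_ne_two (hd : d ≠ 2) {i k : Fin (d + 2)} (hi₀ : i ≠ 0) (hi₁ : i ≠ 1)
    (hk₀ : k ≠ 0) (hk₁ : k ≠ 1) (hik : i ≠ k) :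
    ∃ l, l ∉ ({0, 1, i, k} : Finset (Fin (d + 2))) := by
  by_contra! h
  have hcard : ({0, 1, i, k} : Finset (Fin (d + 2))).card = 4 := by
    simp [Finset.card_insert_of_notMem, hi₀.symm, hi₁.symm, hk₀.symm, hk₁.symm, hik]
  rw [Finset.eq_univ_of_forall h, Finset.card_fin] at hcard
  omega

theorem map_single_eq_zero_of_commute_signFlip (hd : d ≠ 2)
    (hskew : ∀ x y, mink (Q x) y = -mink x (Q y))
    (hj : ∀ x, signFlip {0, 1} (Q x) = Q (signFlip {0, 1} x))
    (hturn : ∀ s, 0 ∉ s → 1 ∉ s → Even s.card → ∀ x, signFlip s (Q x) = Q (signFlip s x))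
    (i : Fin (d + 2)) (hi₀ : i ≠ 0) (hi₁ : i ≠ 1) : Q (Pi.single i 1) = 0 := by
  ext k
  by_cases hk : k = 0 ∨ k = 1
  · exact map_single_apply_eq_zero_of_commute_signFlip hj (by simp [hi₀, hi₁, hk]) 1
  obtain ⟨hk₀, hk₁⟩ := not_or.1 hk
  obtain rfl | hik := eq_or_ne i k
  · exact map_single_apply_self_eq_zero hskew i
  obtain ⟨l, hl⟩ := exists_notMem_of_ne_two hd hi₀ hi₁ hk₀ hk₁ hik
  simp only [Finset.mem_insert, Finset.mem_singleton, not_or] at hl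
  obtain ⟨hl₀, hl₁, hli, hlk⟩ := hl
  refine map_single_apply_eq_zero_of_commute_signFlip (s := {i, l}) (hturn _ ?_ ?_ ?_) ?_ 1
  · simp [hi₀.symm, Ne.symm hl₀]
  · simp [hi₁.symm, Ne.symm hl₁]
  · simp [Finset.card_pair (Ne.symm hli)]
  · simp [hik.symm, Ne.symm hlk]

end Skew

theorem eq_zero_of_forall_add_mul_pos {a b : ℝ} (h : ∀ t : ℝ, 0 < a + t * b) : b = 0 := by
  by_contra hb
  simpa [hb] using h (-a / b)

theorem eq_zero_of_line_subset_WR {p v : Fin (d + 2) → ℝ} (h : ∀ t : ℝ, p + t • v ∈ WR) :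
    v 0 = 0 ∧ v 1 = 0 := by
  have hlt (t : ℝ) : -(p 1 + t * v 1) < p 0 + t * v 0 ∧ p 0 + t * v 0 < p 1 + t * v 1 :=
    abs_lt.1 (h t)
  have hsub : v 1 - v 0 = 0 :=
    eq_zero_of_forall_add_mul_pos (a := p 1 - p 0) fun t => by linarith [(hlt t).2]
  have hadd : v 1 + v 0 = 0 :=
    eq_zero_of_forall_add_mul_pos (a := p 1 + p 0) fun t => by linarith [(hlt t).1]
  constructor <;> linarith

section Lorentz

variable {Λ : (Fin (d + 2) → ℝ) →ₗ[ℝ] (Fin (d + 2) → ℝ)}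

theorem map_apply_eq_zero_of_mapsTo_WR (hW : Set.MapsTo Λ WR WR) {v : Fin (d + 2) → ℝ}
    (h₀ : v 0 = 0) (h₁ : v 1 = 0) : Λ v 0 = 0 ∧ Λ v 1 = 0 := by
  refine eq_zero_of_line_subset_WR (p := Λ (Pi.single 1 1)) fun t => ?_
  rw [← map_smul, ← map_add]
  exact hW (by simp [WR, h₀, h₁])

theorem exists_boostGenerator_map_eq_smul (hbij : Function.Bijective Λ)
    (hΛ : ∀ x y, mink (Λ x) (Λ y) = mink x y)
    (hedge : ∀ v, v 0 = 0 → v 1 = 0 → Λ v 0 = 0 ∧ Λ v 1 = 0) :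
    ∃ c : ℝ, ∀ x, boostGenerator d (Λ x) = c • Λ (boostGenerator d x) := by
  let e := LinearEquiv.ofBijective Λ hbij
  let M := e.symm.conj (boostGenerator d)
  have hM (x : Fin (d + 2) → ℝ) : Λ (M x) = boostGenerator d (Λ x) := e.apply_symm_apply _
  have hskew (x y : Fin (d + 2) → ℝ) : mink (M x) y = -mink x (M y) := by
    rw [← hΛ, hM, mink_boostGenerator_left, ← hM, hΛ]
  have hMedge (i : Fin (d + 2)) (h₀ : i ≠ 0) (h₁ : i ≠ 1) : M (Pi.single i 1) = 0 := by
    obtain ⟨hΛ₀, hΛ₁⟩ := hedge (Pi.single i 1) (by simp [h₀.symm]) (by simp [h₁.symm])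
    apply hbij.1
    simp [hM, boostGenerator_apply, hΛ₀, hΛ₁]
  refine ⟨M (Pi.single 0 1) 1, fun x => ?_⟩
  rw [← hM, eq_smul_boostGenerator hskew hMedge]
  simp

theorem map_boostGenerator_of_smul_mapsTo_WR (hbij : Function.Bijective Λ)
    (hΛ : ∀ x y, mink (Λ x) (Λ y) = mink x y) (horth : 0 < Λ (Pi.single 0 1) 0) {s : ℝ}
    (hs : s ^ 2 = 1) (hW : Set.MapsTo (s • Λ) WR WR) (x : Fin (d + 2) → ℝ) :
    Λ (boostGenerator d x) = s • boostGenerator d (Λ x) := by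
  have hs₀ : s ≠ 0 := by
    rintro rfl
    simp at hs
  obtain ⟨c, hc⟩ := exists_boostGenerator_map_eq_smul hbij hΛ fun v h₀ h₁ => by
    simpa [hs₀] using map_apply_eq_zero_of_mapsTo_WR hW h₀ h₁
  have hwedge : 0 < s * Λ (Pi.single 1 1) 1 :=
    (abs_nonneg _).trans_lt (hW (show Pi.single 1 1 ∈ WR by simp [WR]))
  have h₀₁ : Λ (Pi.single 0 1) 0 = c * Λ (Pi.single 1 1) 1 := by
    simpa using congrFun (hc (Pi.single 0 1)) 1
  have h₁₀ : Λ (Pi.single 1 1) 1 = c * Λ (Pi.single 0 1) 0 := by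
    simpa using congrFun (hc (Pi.single 1 1)) 0
  have hsign : Λ (Pi.single 0 1) 0 = s * Λ (Pi.single 1 1) 1 := by
    refine (sq_eq_sq₀ horth.le hwedge.le).1 ?_
    linear_combination Λ (Pi.single 0 1) 0 * h₀₁ - Λ (Pi.single 1 1) 1 * h₁₀
      - Λ (Pi.single 1 1) 1 ^ 2 * hs
  have hcs : c = s :=
    mul_right_cancel₀ (right_ne_zero_of_mul hwedge.ne') (h₀₁.symm.trans hsign)
  rw [hc, hcs, smul_smul, ← sq, hs, one_smul]

end Lorentz

/-- classification of admissible deformation matrices in dimension `d ≠ 4`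
(here the dimension is `d + 2`, so we require `d ≠ 2`): a Minkowski-skew-symmetric linear map
`Q` satisfies the admissibility conditions (i) `ΛQΛ⁻¹ = Q` for proper orthochronous `Λ` with
`Λ(W_R) = W_R`, (ii) `ΛQΛ⁻¹ = -Q` for proper orthochronous `Λ` with `Λ(W_R) = -W_R` and
`jQj = Q`, (iii) `Q` maps the closed forward light cone into the closed right wedge — if and
only if `Q` has the standard form `Qx = κ(x₁, x₀, 0, ..., 0)` with `κ ≥ 0`. -/
theorem admissible_Q_classification (d : ℕ) (hd : d ≠ 2)
    (Q : (Fin (d + 2) → ℝ) →ₗ[ℝ] (Fin (d + 2) → ℝ))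
    (hskew : ∀ x y, mink (Q x) y = - mink x (Q y)) :
    ((∀ Λ : (Fin (d + 2) → ℝ) →ₗ[ℝ] (Fin (d + 2) → ℝ),
        Function.Bijective Λ → (∀ x y, mink (Λ x) (Λ y) = mink x y) →
        LinearMap.det Λ = 1 → 0 < Λ (Pi.single 0 1) 0 →
        (⇑Λ) '' WR = WR → ∀ x, Λ (Q x) = Q (Λ x)) ∧
     (∀ Λ : (Fin (d + 2) → ℝ) →ₗ[ℝ] (Fin (d + 2) → ℝ),
        Function.Bijective Λ → (∀ x y, mink (Λ x) (Λ y) = mink x y) →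
        LinearMap.det Λ = 1 → 0 < Λ (Pi.single 0 1) 0 →
        (⇑Λ) '' WR = {x | -x ∈ WR} → ∀ x, Λ (Q x) = - Q (Λ x)) ∧
     (∀ x, jrefl (Q (jrefl x)) = Q x) ∧
     (∀ x : Fin (d + 2) → ℝ, 0 ≤ x 0 → 0 ≤ mink x x → |Q x 0| ≤ Q x 1))
    ↔ (∃ κ : ℝ, 0 ≤ κ ∧ ∀ x : Fin (d + 2) → ℝ,
        Q x 0 = κ * x 1 ∧ Q x 1 = κ * x 0 ∧
        ∀ i : Fin (d + 2), i ≠ 0 → i ≠ 1 → Q x i = 0) := by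
  constructor
  · rintro ⟨hcomm, -, hj, hcone⟩
    have hturn (s : Finset (Fin (d + 2))) (h₀ : 0 ∉ s) (h₁ : 1 ∉ s) (hs : Even s.card) :
        ∀ x, signFlip s (Q x) = Q (signFlip s x) :=
      hcomm _ (signFlip_involutive s).bijective (mink_signFlip s)
        (by rw [det_signFlip, hs.neg_one_pow]) (by simp [signFlip_apply, h₀])
        (image_signFlip_WR h₀ h₁)
    have hedge :=
      map_single_eq_zero_of_commute_signFlip hd hskew (signFlip_commute_of_jrefl hj) hturn
    have hκ := hcone (Pi.single 0 1) (by simp) (by simp [mink_single_right])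
    exact ⟨_, (abs_nonneg _).trans hκ,
      eq_smul_boostGenerator_iff.1 (eq_smul_boostGenerator hskew hedge)⟩
  · rintro ⟨κ, hκ, hQ⟩
    obtain rfl := eq_smul_boostGenerator_iff.2 hQ
    refine ⟨fun Λ hbij hΛ _ horth hW x => ?_, fun Λ hbij hΛ _ horth hW x => ?_,
      jrefl_smul_boostGenerator_jrefl κ, fun x hx₀ hx => ?_⟩
    · have hmaps : Set.MapsTo ((1 : ℝ) • Λ) WR WR := by
        simpa using Set.mapsTo_iff_image_subset.2 hW.subset
      simp [map_boostGenerator_of_smul_mapsTo_WR hbij hΛ horth (one_pow 2) hmaps]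
    · have hmaps : Set.MapsTo ((-1 : ℝ) • Λ) WR WR := fun y hy => by
        simpa using hW.subset (Set.mem_image_of_mem Λ hy)
      simp [map_boostGenerator_of_smul_mapsTo_WR hbij hΛ horth neg_one_sq hmaps]
    · simpa [abs_mul, abs_of_nonneg hκ] using
        mul_le_mul_of_nonneg_left (abs_apply_one_le_of_mink_self_nonneg hx₀ hx) hκ
end
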